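/- If X ⊆ ℝ is a λ-set, then (X[≤])² is a pseudo-normal topological space. -/

import Mathlib

/-- The Sorgenfrey (lower limit) topology on `ℝ`, generated by half-open
intervals `[a, b)` with `a < b`. -/
def sorgenfrey : TopologicalSpace ℝ :=
  TopologicalSpace.generateFrom {s : Set ℝ | ∃ a b : ℝ, a < b ∧ s = Set.Ico a b}

/-- The Sorgenfrey subspace topology on a set of reals `X`, i.e. `X[≤]`. -/
def sorgenfreySub (X : Set ℝ) : TopologicalSpace X :=
  sorgenfrey.induced Subtype.val

/-- The product topology `(X[≤])²` on `X × X`. -/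
def sorgenfreySq (X : Set ℝ) : TopologicalSpace (X × X) :=
  @instTopologicalSpaceProd X X (sorgenfreySub X) (sorgenfreySub X)

/-- A set of reals `X` is a λ-set if every countable subset of `X` is a
relative `Gδ`-set in `X` with respect to the Euclidean subspace topology. -/
def IsLambdaSet (X : Set ℝ) : Prop :=
  ∀ A : Set ℝ, A ⊆ X → A.Countable → IsGδ (Subtype.val ⁻¹' A : Set X)

/-- A topological space is pseudo-normal if any two disjoint closed sets, one
of which is countable, can be separated by disjoint open sets. -/
def PseudoNormalSpace (Z : Type*) [TopologicalSpace Z] : Prop :=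
  ∀ A B : Set Z, IsClosed A → IsClosed B → A.Countable → Disjoint A B →
    ∃ U V : Set Z, IsOpen U ∧ IsOpen V ∧ A ⊆ U ∧ B ⊆ V ∧ Disjoint U V

/-!
In a regular space a countable set is always countably covered by open sets whose closures miss a
given disjoint closed set, so only the closed set `B` opposite to the countable closed set `A` needs
a similar cover. If `X` is a λ-set and `D ⊆ X` is countable, then `X` is a countable union of sets
`P` none of which accumulates at a point of `D`. Intervals `[x, x + ε)` with `x ∈ P` that meet a
small enough `[d, d + δ)` must then start at or to the left of `d`, hence contain `d`; so a union of
such intervals does not have `d` in its closure unless one of them already contains `d`. This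
property is stable under products, and it lets the boxes missing `A` be grouped into countably many
open sets whose closures still miss `A` and which together cover `B`.
-/

open Set Filter Topology TopologicalSpace

section SeparatingCovers

variable {Z : Type*} [TopologicalSpace Z]

theorem hasSeparatingCover_of_subset_sUnion {s t : Set Z} {𝒰 : Set (Set Z)} (h𝒰 : 𝒰.Countable)
    (hs : s ⊆ ⋃₀ 𝒰) (hopen : ∀ U ∈ 𝒰, IsOpen U) (hdisj : ∀ U ∈ 𝒰, Disjoint (closure U) t) :
    HasSeparatingCover s t := by
  obtain ⟨u, hu⟩ := (h𝒰.insert ∅).exists_eq_range (insert_nonempty ∅ 𝒰)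
  refine ⟨u, ?_, fun n ↦ ?_⟩
  · rw [← sUnion_range, ← hu]
    exact hs.trans (sUnion_mono (subset_insert ∅ 𝒰))
  · obtain hn | hn : u n ∈ insert ∅ 𝒰 := hu ▸ mem_range_self n
    · simp [hn]
    · exact ⟨hopen _ hn, hdisj _ hn⟩

theorem hasSeparatingCover_of_countable [RegularSpace Z] {A B : Set Z} (hA : A.Countable)
    (hB : IsClosed B) (hAB : Disjoint A B) : HasSeparatingCover A B := by
  have hnhd (a : A) : ∃ U : Set Z, (a : Z) ∈ U ∧ IsOpen U ∧ Disjoint (closure U) B := by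
    have hBa : Bᶜ ∈ 𝓝 (a : Z) := hB.isOpen_compl.mem_nhds (disjoint_left.1 hAB a.2)
    obtain ⟨F, ⟨hFa, hF⟩, hFB⟩ := (closed_nhds_basis (a : Z)).mem_iff.1 hBa
    refine ⟨interior F, mem_interior_iff_mem_nhds.2 hFa, isOpen_interior, ?_⟩
    exact (subset_compl_iff_disjoint_right.1 hFB).mono_left
      (closure_minimal interior_subset hF)
  choose U hmem hopen hdisj using hnhd
  have := hA.to_subtype
  exact hasSeparatingCover_of_subset_sUnion (countable_range U)
    (fun a ha ↦ ⟨U ⟨a, ha⟩, mem_range_self _, hmem ⟨a, ha⟩⟩)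
    (forall_mem_range.2 hopen) (forall_mem_range.2 hdisj)

theorem disjoint_closure_biUnion {α : Type*} {N : α → Set Z} {S : Set α} {A : Set Z}
    (hA : ∀ a ∈ A, ∀ᶠ y in 𝓝 a, ∀ x ∈ S, y ∈ N x → a ∈ N x) (hN : ∀ x ∈ S, Disjoint (N x) A) :
    Disjoint (closure (⋃ x ∈ S, N x)) A := by
  rw [disjoint_right]
  intro a ha hcl
  obtain ⟨y, hyN, hy⟩ := ((mem_closure_iff_frequently.1 hcl).and_eventually (hA a ha)).exists
  obtain ⟨x, hx, hyx⟩ := mem_iUnion₂.1 hyN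
  exact disjoint_left.1 (hN x hx) (hy x hx hyx) ha

theorem exists_countable_sUnion_eq_univ_of_isGδ [T1Space Z] {D : Set Z} (hD : D.Countable)
    (hG : IsGδ D) : ∃ 𝒞 : Set (Set Z), 𝒞.Countable ∧ ⋃₀ 𝒞 = univ ∧
      ∀ d ∈ D, ∀ P ∈ 𝒞, ∀ᶠ x in 𝓝 d, x ∈ P → x = d := by
  obtain ⟨G, hGopen, rfl⟩ := hG.eq_iInter_nat
  refine ⟨range (fun n ↦ (G n)ᶜ) ∪ singleton '' ⋂ n, G n,
    (countable_range _).union (hD.image _), ?_, ?_⟩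
  · rw [sUnion_union, sUnion_range, ← compl_iInter, sUnion_image, biUnion_of_singleton,
      compl_union_self]
  · rintro d hd _ (⟨n, rfl⟩ | ⟨c, -, rfl⟩)
    · filter_upwards [(hGopen n).mem_nhds (mem_iInter.1 hd n)] with x hx hxn
      exact absurd hx hxn
    · obtain rfl | hdc := eq_or_ne d c
      · exact Eventually.of_forall fun x hx ↦ hx
      · filter_upwards [isOpen_ne.mem_nhds hdc] with x hx hxc
        exact absurd hxc hx

end SeparatingCovers

/-- A system of clopen neighbourhood bases `N z` satisfying a form of the λ-set property that
survives products: for every countable `A`, the space is covered by countably many pieces `P` such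
that, for each fixed index `i`, a point `a ∈ A` has a neighbourhood meeting only those `N x i` with
`x ∈ P` that contain `a`. -/
structure IsLambdaBasis {Z ι : Type*} [TopologicalSpace Z] (N : Z → ι → Set Z) : Prop where
  hasBasis_nhds : ∀ z, (𝓝 z).HasBasis (fun _ ↦ True) (N z)
  isClopen : ∀ z i, IsClopen (N z i)
  exists_cover : ∀ A : Set Z, A.Countable → ∃ 𝒞 : Set (Set Z), 𝒞.Countable ∧ ⋃₀ 𝒞 = univ ∧
    ∀ a ∈ A, ∀ P ∈ 𝒞, ∀ i, ∀ᶠ y in 𝓝 a, ∀ x ∈ P, y ∈ N x i → a ∈ N x i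

namespace IsLambdaBasis

variable {Z W ι κ : Type*} [TopologicalSpace Z] [TopologicalSpace W]
  {N : Z → ι → Set Z} {M : W → κ → Set W}

theorem regularSpace (hN : IsLambdaBasis N) : RegularSpace Z :=
  .of_hasBasis hN.hasBasis_nhds fun z i _ ↦ (hN.isClopen z i).isClosed

theorem prod (hN : IsLambdaBasis N) (hM : IsLambdaBasis M) :
    IsLambdaBasis fun (z : Z × W) (i : ι × κ) ↦ N z.1 i.1 ×ˢ M z.2 i.2 where
  hasBasis_nhds z := by
    simpa only [and_self] using (hN.hasBasis_nhds z.1).prod_nhds (hM.hasBasis_nhds z.2)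
  isClopen z i := (hN.isClopen z.1 i.1).prod (hM.isClopen z.2 i.2)
  exists_cover A hA := by
    obtain ⟨𝒞, h𝒞, h𝒞univ, hNA⟩ := hN.exists_cover _ (hA.image Prod.fst)
    obtain ⟨𝒟, h𝒟, h𝒟univ, hMA⟩ := hM.exists_cover _ (hA.image Prod.snd)
    refine ⟨image2 (· ×ˢ ·) 𝒞 𝒟, h𝒞.image2 h𝒟 _, eq_univ_of_forall fun z ↦ ?_, ?_⟩
    · obtain ⟨P, hP, hzP⟩ := sUnion_eq_univ_iff.1 h𝒞univ z.1
      obtain ⟨Q, hQ, hzQ⟩ := sUnion_eq_univ_iff.1 h𝒟univ z.2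
      exact ⟨P ×ˢ Q, mem_image2_of_mem hP hQ, hzP, hzQ⟩
    · rintro a ha _ ⟨P, hP, Q, hQ, rfl⟩ i
      have hfst := hNA a.1 (mem_image_of_mem _ ha) P hP i.1
      have hsnd := hMA a.2 (mem_image_of_mem _ ha) Q hQ i.2
      filter_upwards [hfst.prod_nhds hsnd] with y hy x hx hyx
      exact ⟨hy.1 x.1 hx.1 hyx.1, hy.2 x.2 hx.2 hyx.2⟩

theorem hasSeparatingCover [Countable ι] (hN : IsLambdaBasis N) {A B : Set Z} (hAc : A.Countable)
    (hA : IsClosed A) (hAB : Disjoint A B) : HasSeparatingCover B A := by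
  obtain ⟨𝒞, h𝒞, h𝒞univ, hNA⟩ := hN.exists_cover A hAc
  let V (P : Set Z) (i : ι) : Set Z := ⋃ x ∈ {x ∈ P | Disjoint (N x i) A}, N x i
  refine hasSeparatingCover_of_subset_sUnion (𝒰 := image2 V 𝒞 univ) (h𝒞.image2 countable_univ V)
    (fun b hb ↦ ?_) ?_ ?_
  · obtain ⟨P, hP, hbP⟩ := sUnion_eq_univ_iff.1 h𝒞univ b
    have hAb : Aᶜ ∈ 𝓝 b := hA.isOpen_compl.mem_nhds (disjoint_right.1 hAB hb)
    obtain ⟨i, -, hi⟩ := (hN.hasBasis_nhds b).mem_iff.1 hAb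
    exact ⟨V P i, mem_image2_of_mem hP (mem_univ i),
      mem_biUnion (show b ∈ {x ∈ P | Disjoint (N x i) A} from
        ⟨hbP, subset_compl_iff_disjoint_right.1 hi⟩)
        (mem_of_mem_nhds ((hN.hasBasis_nhds b).mem_of_mem trivial))⟩
  · rintro _ ⟨P, -, i, -, rfl⟩
    exact isOpen_biUnion fun x _ ↦ (hN.isClopen x i).isOpen
  · rintro _ ⟨P, hP, i, -, rfl⟩
    refine disjoint_closure_biUnion (fun a ha ↦ ?_) fun x hx ↦ hx.2
    exact (hNA a ha P hP i).mono fun y hy x hx ↦ hy x hx.1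

theorem pseudoNormalSpace [Countable ι] (hN : IsLambdaBasis N) : PseudoNormalSpace Z := by
  intro A B hA hB hAc hAB
  have := hN.regularSpace
  exact hasSeparatingCovers_iff_separatedNhds.1
    ⟨hasSeparatingCover_of_countable hAc hB hAB, hN.hasSeparatingCover hAc hA hAB⟩

end IsLambdaBasis

theorem nhds_sorgenfrey (x : ℝ) : @nhds ℝ sorgenfrey x = 𝓝[≥] x := by
  rw [sorgenfrey, nhds_generateFrom]
  refine le_antisymm ?_ (le_iInf₂ ?_)
  · rw [(nhdsGE_basis x).ge_iff]
    exact fun b hb ↦ mem_iInf_of_mem _ (mem_iInf_of_mem ⟨left_mem_Ico.2 hb, x, b, hb, rfl⟩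
      (mem_principal_self _))
  · rintro _ ⟨hx, a, b, -, rfl⟩
    exact le_principal_iff.2 (Ico_mem_nhdsGE_of_mem hx)

theorem isOpen_sorgenfrey_iff {s : Set ℝ} : IsOpen[sorgenfrey] s ↔ ∀ x ∈ s, s ∈ 𝓝[≥] x := by
  simp only [@isOpen_iff_mem_nhds ℝ sorgenfrey s, nhds_sorgenfrey]

theorem isClopen_Ico_sorgenfrey (a b : ℝ) : @IsClopen ℝ sorgenfrey (Ico a b) := by
  refine ⟨@IsClosed.mk ℝ sorgenfrey _ (isOpen_sorgenfrey_iff.2 fun y hy ↦ ?_),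
    isOpen_sorgenfrey_iff.2 fun x hx ↦ Ico_mem_nhdsGE_of_mem hx⟩
  obtain hya | hby : y < a ∨ b ≤ y := by
    simpa only [mem_compl_iff, mem_Ico, not_and_or, not_le, not_lt] using hy
  · exact mem_of_superset (Ico_mem_nhdsGE hya) fun z hz hz' ↦ hz'.1.not_gt hz.2
  · exact mem_of_superset self_mem_nhdsWithin fun z hz hz' ↦ (hby.trans hz).not_gt hz'.2

theorem nhdsGE_basis_Ico_add_one_div (x : ℝ) :
    (𝓝[≥] x).HasBasis (fun _ : ℕ ↦ True) fun n ↦ Ico x (x + 1 / (n + 1)) := by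
  refine (nhdsGE_basis x).to_hasBasis (fun b hb ↦ ?_) fun n _ ↦
    ⟨_, lt_add_of_pos_right x Nat.one_div_pos_of_nat, Subset.rfl⟩
  obtain ⟨n, hn⟩ := exists_nat_one_div_lt (sub_pos.2 hb)
  exact ⟨n, trivial, Ico_subset_Ico_right (lt_sub_iff_add_lt'.1 hn).le⟩

/-- The trace on `X` of the interval `[x, x + 1 / (n + 1))`, the `n`-th basic neighbourhood of `x`
in `X[≤]`. -/
def sorgenfreyNhd {X : Set ℝ} (x : X) (n : ℕ) : Set X :=
  Subtype.val ⁻¹' Ico (x : ℝ) (x + 1 / (n + 1))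

section SorgenfreySubspace

variable {X : Set ℝ}

theorem nhds_sorgenfreySub (x : X) :
    @nhds X (sorgenfreySub X) x = comap Subtype.val (𝓝[≥] (x : ℝ)) := by
  rw [sorgenfreySub, @nhds_induced, nhds_sorgenfrey]

theorem hasBasis_nhds_sorgenfreySub (x : X) :
    (@nhds X (sorgenfreySub X) x).HasBasis (fun _ ↦ True) (sorgenfreyNhd x) := by
  rw [nhds_sorgenfreySub]
  exact (nhdsGE_basis_Ico_add_one_div x).comap _

theorem isClopen_sorgenfreyNhd (x : X) (n : ℕ) :
    @IsClopen X (sorgenfreySub X) (sorgenfreyNhd x n) :=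
  let := sorgenfrey
  let := sorgenfreySub X
  (isClopen_Ico_sorgenfrey _ _).preimage continuous_induced_dom

theorem eventually_mem_sorgenfreyNhd {d : X} {P : Set X} (hP : ∀ᶠ x in 𝓝 d, x ∈ P → x = d)
    (n : ℕ) : ∀ᶠ y in @nhds X (sorgenfreySub X) d,
      ∀ x ∈ P, y ∈ sorgenfreyNhd x n → d ∈ sorgenfreyNhd x n := by
  obtain ⟨δ, hδ, hPδ⟩ := Metric.eventually_nhds_iff.1 hP
  rw [nhds_sorgenfreySub]
  filter_upwards [preimage_mem_comap (Ico_mem_nhdsGE (lt_add_of_pos_right (d : ℝ) hδ))]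
    with y ⟨hdy, hyδ⟩ x hx ⟨hxy, hyx⟩
  suffices hxd : (x : ℝ) ≤ d from ⟨hxd, hdy.trans_lt hyx⟩
  by_contra! hdx
  have hdist : dist x d < δ := by
    rw [Subtype.dist_eq, Real.dist_eq, abs_of_pos (sub_pos.2 hdx)]
    linarith
  exact hdx.ne' (congrArg Subtype.val (hPδ hdist hx))

namespace IsLambdaSet

theorem isGδ (hX : IsLambdaSet X) {D : Set X} (hD : D.Countable) : IsGδ D := by
  simpa only [preimage_image_eq _ Subtype.val_injective] using
    hX (Subtype.val '' D) (Subtype.coe_image_subset X D) (hD.image _)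

theorem isLambdaBasis (hX : IsLambdaSet X) :
    @IsLambdaBasis X ℕ (sorgenfreySub X) sorgenfreyNhd :=
  @IsLambdaBasis.mk X ℕ (sorgenfreySub X) sorgenfreyNhd hasBasis_nhds_sorgenfreySub
    isClopen_sorgenfreyNhd fun _ hD ↦
      have ⟨𝒞, h𝒞, h𝒞univ, hacc⟩ := exists_countable_sUnion_eq_univ_of_isGδ hD (hX.isGδ hD)
      ⟨𝒞, h𝒞, h𝒞univ, fun d hd P hP ↦ eventually_mem_sorgenfreyNhd (hacc d hd P hP)⟩

end IsLambdaSet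

end SorgenfreySubspace

theorem stmt13_general {X Y : Set ℝ} (hX : IsLambdaSet X) (hY : IsLambdaSet Y) :
    @PseudoNormalSpace (X × Y)
      (@instTopologicalSpaceProd X Y (sorgenfreySub X) (sorgenfreySub Y)) :=
  let := sorgenfreySub X
  let := sorgenfreySub Y
  (hX.isLambdaBasis.prod hY.isLambdaBasis).pseudoNormalSpace

/-- If `X` is a λ-set then `(X[≤])²` is pseudo-normal. -/
theorem stmt13 (X : Set ℝ) (hX : IsLambdaSet X) :
    @PseudoNormalSpace (X × X) (sorgenfreySq X) :=
  stmt13_general hX hX
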